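/- Let n and r be positive integers such that gcd(q, nr) = 1. Let C be a nonzero cyclic code in A_q(r) with d*(C) = δ > 1 and let α = (α_1, α_2) ∈ U_n × R(C), where R(C) is the set of optimized roots of C. Then the abelian code C_n in A_q(n,r) with defining set D_α(C_n) = Z_n × D_{α_2}(C) satisfies d*(C_n) = δ and dim_{F_q}(C_n) = n·dim_{F_q}(C). -/

import Mathlib

open Classical

noncomputable section

namespace AbelianCodes

/-- The index set `I = Z_{r 0} × ⋯ × Z_{r (s-1)}`. -/
abbrev Idx {s : ℕ} (r : Fin s → ℕ) : Type := ∀ k, ZMod (r k)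

variable {F : Type*} [Field F]

/-- The support of a hypermatrix. -/
def hsupp {s : ℕ} {r : Fin s → ℕ} (M : Idx r → F) : Set (Idx r) := {i | M i ≠ 0}

/-- The hypercolumn `H_M(k,b)` of a hypermatrix, viewed as an `(s-1)`-dimensional
hypermatrix indexed by `∏_{j ≠ k} Z_{r j}`. -/
def hypercol {s : ℕ} {r : Fin (s+1) → ℕ} (M : Idx r → F) (k : Fin (s+1)) (b : ZMod (r k)) :
    Idx (fun j => r (k.succAbove j)) → F :=
  fun i => M (k.insertNth b i)

/-- `ω_M(k,b)`: the number of consecutive zero hypercolumns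
`H_M(k,b+1), H_M(k,b+2), …` (indices modulo `r k`). -/
def runLen {s : ℕ} {r : Fin (s+1) → ℕ} (M : Idx r → F) (k : Fin (s+1)) (b : ZMod (r k)) : ℕ :=
  ((Finset.Ico 1 (r k)).filter
    (fun j => ∀ m : ℕ, m ∈ Finset.Icc 1 j → hypercol M k (b + (m : ZMod (r k))) = 0)).card

/-- The apparent distance `d*(M)` of a hypermatrix, defined recursively on the
number of variables.  (A `0`-dimensional hypermatrix is a scalar, of apparent
distance `1` if nonzero and `0` otherwise; with this convention the `1`-dimensional
case becomes `max {ω_M(b)+1 : a_b ≠ 0}` and the higher-dimensional case becomes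
`max_k max {(ω_M(k,b)+1)·d*(H_M(k,b)) : H_M(k,b) ≠ 0}`, since zero hypermatrices
have apparent distance `0`.) -/
def apd : {s : ℕ} → (r : Fin s → ℕ) → (Idx r → F) → ℕ
  | 0, _, M => if M finZeroElim = 0 then 0 else 1
  | _+1, r, M =>
      Finset.univ.sup fun k =>
        Finset.univ.sup fun b : Fin (r k) =>
          (runLen M k ((b : ℕ) : ZMod (r k)) + 1) *
            apd (fun j => r (k.succAbove j)) (hypercol M k ((b : ℕ) : ZMod (r k)))

/-- The `q^t`-orbit `Q_t(a)` of `a ∈ I`. -/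
def qOrbit {s : ℕ} (r : Fin s → ℕ) (q t : ℕ) (a : Idx r) : Set (Idx r) :=
  {i | ∃ n : ℕ, ∀ k, i k = (q : ZMod (r k)) ^ (t * n) * a k}

/-- `D` is a union of `q^t`-orbits. -/
def OrbitUnion {s : ℕ} (r : Fin s → ℕ) (q t : ℕ) (D : Set (Idx r)) : Prop :=
  ∀ a ∈ D, qOrbit r q t a ⊆ D

/-- The hypermatrix afforded by `D ⊆ I`: entry `0` at indices in `D`, entry `1` elsewhere. -/
def afforded {s : ℕ} (r : Fin s → ℕ) (D : Set (Idx r)) : Idx r → F :=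
  fun i => if i ∈ D then 0 else 1

/-- `M` is a `q^t`-orbits hypermatrix, i.e. the hypermatrix afforded by some union
of `q^t`-orbits. -/
def IsOrbitMx {s : ℕ} (r : Fin s → ℕ) (q t : ℕ) (M : Idx r → F) : Prop :=
  ∃ D : Set (Idx r), OrbitUnion r q t D ∧ M = afforded r D

/-- The minimum apparent distance `mad(M) = min {d*(P) : P a q^t-orbits hypermatrix,
`0 ≠ P ≤ M`}`, where `P ≤ M` means `supp P ⊆ supp M`. -/
def mad {s : ℕ} (r : Fin s → ℕ) (q t : ℕ) (M : Idx r → F) : ℕ :=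
  sInf {d | ∃ P : Idx r → F, IsOrbitMx r q t P ∧ P ≠ 0 ∧ hsupp P ⊆ hsupp M ∧ apd r P = d}

/-- The `q^t`-cyclotomic coset of `b` modulo `r`. -/
def cycCoset (r q t : ℕ) (b : ZMod r) : Set (ZMod r) :=
  {x | ∃ n : ℕ, x = (q : ZMod r) ^ (t * n) * b}



variable {F : Type*} [Field F] {L : Type*} [Field L] [Algebra F L]

/-- An abelian code: a subspace of the group algebra `F[∏ Z_{r k}]` (identified
with the space of coefficient functions `I → F`) which is closed under all
translations, i.e. an ideal. -/
def IsAbelianCode {s : ℕ} {r : Fin s → ℕ} (C : Submodule F (Idx r → F)) : Prop :=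
  ∀ f ∈ C, ∀ a : Idx r, (fun i => f (i - a)) ∈ C

/-- Convolution: the multiplication of the group algebra in the coefficient
function picture. -/
def conv {s : ℕ} {r : Fin s → ℕ} [∀ k, NeZero (r k)] (f g : Idx r → F) : Idx r → F :=
  fun i => ∑ u : Idx r, f u * g (i - u)

/-- The (discrete) Fourier transform `φ_{α,f}(j) = f(α^j)` of a coefficient
function `f : I → F` with respect to `α`, with values in the extension `L`. -/
def fourier {s : ℕ} {r : Fin s → ℕ} [∀ k, NeZero (r k)] (α : Fin s → L) (f : Idx r → F) :
    Idx r → L :=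
  fun j => ∑ i : Idx r, algebraMap F L (f i) * ∏ k, α k ^ ((i k).val * (j k).val)

/-- The Hamming weight of a codeword. -/
def wt {s : ℕ} {r : Fin s → ℕ} [∀ k, NeZero (r k)] (f : Idx r → F) : ℕ :=
  (Finset.univ.filter fun i : Idx r => f i ≠ 0).card

/-- The minimum distance of a code. -/
def dmin {s : ℕ} {r : Fin s → ℕ} [∀ k, NeZero (r k)] (C : Submodule F (Idx r → F)) : ℕ :=
  sInf {w | ∃ f ∈ C, f ≠ (0 : Idx r → F) ∧ wt f = w}

/-- The defining set `D_α(C) = {a ∈ I : f(α^a) = 0 for all f ∈ C}`. -/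
def defSet {s : ℕ} (r : Fin s → ℕ) [∀ k, NeZero (r k)] (α : Fin s → L)
    (C : Submodule F (Idx r → F)) : Set (Idx r) :=
  {a | ∀ f ∈ C, fourier α f a = 0}

/-- The apparent distance of a code `C` with respect to `α`:
`d_α*(C) = min {d*(M(φ_{α,e})) : 0 ≠ e = e² ∈ C}`. -/
def dStarAlpha {s : ℕ} (r : Fin s → ℕ) [∀ k, NeZero (r k)] (α : Fin s → L)
    (C : Submodule F (Idx r → F)) : ℕ :=
  sInf {d | ∃ e, e ∈ C ∧ e ≠ (0 : Idx r → F) ∧ conv e e = e ∧ apd r (fourier α e) = d}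

/-- The apparent distance of a code: `d*(C) = max {d_β*(C) : β ∈ U}`, where `U`
is the set of tuples of primitive roots of unity in `L`. -/
def dStarCode {s : ℕ} (r : Fin s → ℕ) [∀ k, NeZero (r k)] (L : Type*) [Field L] [Algebra F L]
    (C : Submodule F (Idx r → F)) : ℕ :=
  sSup {d | ∃ α : Fin s → L, (∀ k, IsPrimitiveRoot (α k) (r k)) ∧ dStarAlpha r α C = d}

/-- The defining set of the multivariate BCH code `B_q(α,γ,δ,b)`:
`∪_{k∈γ} ∪_{l=0}^{δ_k−2} ∪_{i ∈ I(k, b_k+l)} Q(i)`. -/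
def bchDefSet {s : ℕ} (r : Fin s → ℕ) (q : ℕ) (γ : Finset (Fin s)) (δ b : Fin s → ℕ) :
    Set (Idx r) :=
  ⋃ k ∈ γ, ⋃ l ∈ Finset.range (δ k - 1),
    ⋃ i ∈ {i : Idx r | i k = ((b k + l : ℕ) : ZMod (r k))}, qOrbit r q 1 i


/-!
An abelian code is determined by its defining set, so `C_n` consists of the words all of whose
hypercolumns in the new direction lie in `C`; this gives the dimension.

The two apparent distances agree for every choice of roots. An idempotent of `C` placed in a single
hypercolumn is an idempotent of `C_n` whose Fourier transform is constant along the new coordinate,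
and the apparent distance of such a hypermatrix is at most that of its hypercolumn. Conversely, the
support of the Fourier transform of an idempotent of `C_n` projects onto the support of the Fourier
transform of an idempotent of `C`, and this projection does not increase the apparent distance.
-/

section Fourier

variable {s : ℕ} {r : Fin s → ℕ}

/-- The pairing `⟨i, j⟩ = ∏ₖ αₖ ^ (iₖ jₖ)`, the kernel of the Fourier transform with respect to
`α`. -/
def pairing (α : Fin s → L) (i j : Idx r) : L :=
  ∏ k, α k ^ ((i k).val * (j k).val)

variable [∀ k, NeZero (r k)] {α : Fin s → L}

lemma fourier_eq_sum_pairing (α : Fin s → L) (f : Idx r → F) (j : Idx r) :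
    fourier α f j = ∑ i, algebraMap F L (f i) * pairing α i j :=
  rfl

lemma fourier_zero (α : Fin s → L) : fourier α (0 : Idx r → F) = 0 := by
  ext j
  simp [fourier_eq_sum_pairing]

lemma fourier_add (α : Fin s → L) (f g : Idx r → F) :
    fourier α (f + g) = fourier α f + fourier α g := by
  ext j
  simp [fourier_eq_sum_pairing, add_mul, Finset.sum_add_distrib]

lemma fourier_smul (α : Fin s → L) (c : F) (f : Idx r → F) :
    fourier α (c • f) = algebraMap F L c • fourier α f := by
  ext j
  simp [fourier_eq_sum_pairing, mul_assoc, Finset.mul_sum]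

lemma pow_val_mul_val_eq_zmodChar {m : ℕ} [NeZero m] {ζ : L} (hζ : ζ ^ m = 1) (a b : ZMod m) :
    ζ ^ (a.val * b.val) = AddChar.zmodChar m hζ (a * b) := by
  rw [AddChar.zmodChar_apply, ZMod.val_mul, ← pow_eq_pow_mod _ hζ]

lemma pairing_add_left (hα : ∀ k, α k ^ r k = 1) (i i' j : Idx r) :
    pairing α (i + i') j = pairing α i j * pairing α i' j := by
  simp only [pairing, ← Finset.prod_mul_distrib, pow_val_mul_val_eq_zmodChar (hα _), Pi.add_apply,
    add_mul, AddChar.map_add_eq_mul]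

lemma sum_pairing (hα : ∀ k, IsPrimitiveRoot (α k) (r k)) (i : Idx r) :
    ∑ j, pairing α i j = if i = 0 then (Fintype.card (Idx r) : L) else 0 := by
  have sum_coordinate (k : Fin s) :
      ∑ b : ZMod (r k), α k ^ ((i k).val * b.val) = if i k = 0 then (r k : L) else 0 := by
    simp only [mul_comm (i k).val, pow_val_mul_val_eq_zmodChar (hα k).pow_eq_one]
    rw [AddChar.sum_mulShift _ (AddChar.zmodChar_primitive_of_primitive_root _ (hα k)), ZMod.card]
    split_ifs <;> simp
  calc ∑ j, pairing α i j
      = ∏ k, ∑ b : ZMod (r k), α k ^ ((i k).val * b.val) := by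
        simp only [pairing, Fintype.prod_sum]
    _ = ∏ k, if i k = 0 then (r k : L) else 0 := Finset.prod_congr rfl fun k _ => sum_coordinate k
    _ = if i = 0 then (Fintype.card (Idx r) : L) else 0 := by
        simp [Finset.prod_ite_zero, funext_iff, Fintype.card_pi, ZMod.card]

lemma card_idx_ne_zero (hα : ∀ k, IsPrimitiveRoot (α k) (r k)) :
    (Fintype.card (Idx r) : L) ≠ 0 := by
  simp only [Fintype.card_pi, ZMod.card, Nat.cast_prod, Finset.prod_ne_zero_iff]
  exact fun k _ => (hα k).neZero'.out

lemma algebraMap_eq_inv_card_mul_sum_fourier (hα : ∀ k, IsPrimitiveRoot (α k) (r k))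
    (f : Idx r → F) (i : Idx r) :
    algebraMap F L (f i) =
      (Fintype.card (Idx r) : L)⁻¹ * ∑ j, pairing α (-i) j * fourier α f j := by
  have swap : ∑ j, pairing α (-i) j * fourier α f j =
      ∑ u, algebraMap F L (f u) * ∑ j, pairing α (u - i) j := by
    simp only [fourier_eq_sum_pairing, Finset.mul_sum, sub_eq_add_neg,
      pairing_add_left fun k => (hα k).pow_eq_one]
    rw [Finset.sum_comm]
    exact Finset.sum_congr rfl fun u _ => Finset.sum_congr rfl fun j _ => by ring
  rw [swap, eq_inv_mul_iff_mul_eq₀ (card_idx_ne_zero hα)]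
  simp [sum_pairing hα, sub_eq_zero, mul_comm]

lemma fourier_injective (hα : ∀ k, IsPrimitiveRoot (α k) (r k)) :
    Function.Injective (fourier α : (Idx r → F) → Idx r → L) := by
  intro f g hfg
  ext i
  apply (algebraMap F L).injective
  rw [algebraMap_eq_inv_card_mul_sum_fourier hα, hfg, ← algebraMap_eq_inv_card_mul_sum_fourier hα]

lemma fourier_eq_zero_iff (hα : ∀ k, IsPrimitiveRoot (α k) (r k)) {f : Idx r → F} :
    fourier α f = 0 ↔ f = 0 := by
  rw [← (fourier_injective (F := F) hα).eq_iff, fourier_zero]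

lemma fourier_translate (hα : ∀ k, α k ^ r k = 1) (f : Idx r → F) (a j : Idx r) :
    fourier α (fun i => f (i - a)) j = pairing α a j * fourier α f j := by
  rw [fourier_eq_sum_pairing, ← Equiv.sum_comp (Equiv.addRight a)]
  simp only [Equiv.coe_addRight, add_sub_cancel_right, pairing_add_left hα, fourier_eq_sum_pairing,
    Finset.mul_sum]
  exact Finset.sum_congr rfl fun i _ => by ring

lemma fourier_conv (hα : ∀ k, α k ^ r k = 1) (f g : Idx r → F) :
    fourier α (conv f g) = fourier α f * fourier α g := by
  ext j
  calc fourier α (conv f g) j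
      = ∑ u, algebraMap F L (f u) * fourier α (fun i => g (i - u)) j := by
        simp only [fourier_eq_sum_pairing, conv, map_sum, map_mul, Finset.sum_mul, Finset.mul_sum,
          mul_assoc]
        exact Finset.sum_comm
    _ = fourier α f j * fourier α g j := by
        simp only [fourier_translate hα, ← mul_assoc, ← Finset.sum_mul, ← fourier_eq_sum_pairing]

lemma conv_self_eq_iff (hα : ∀ k, IsPrimitiveRoot (α k) (r k)) (e : Idx r → F) :
    conv e e = e ↔ ∀ j, IsIdempotentElem (fourier α e j) := by
  rw [← (fourier_injective hα).eq_iff, fourier_conv fun k => (hα k).pow_eq_one, funext_iff]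
  rfl

lemma sum_pairing_neg_mul_translate (hα : ∀ k, α k ^ r k = 1) (f : Idx r → F) (i j : Idx r) :
    ∑ u, pairing α (-u) j * algebraMap F L (f (i - u)) = pairing α (-i) j * fourier α f j := by
  rw [← Equiv.sum_comp (Equiv.subLeft i)]
  simp only [Equiv.subLeft_apply, sub_sub_cancel, neg_sub, sub_eq_add_neg _ i,
    pairing_add_left hα, fourier_eq_sum_pairing, Finset.mul_sum]
  exact Finset.sum_congr rfl fun u _ => by ring

end Fourier

section Idempotent

variable {s : ℕ} {r : Fin s → ℕ} [∀ k, NeZero (r k)] {α : Fin s → L}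
  {C : Submodule F (Idx r → F)}

lemma conv_mem (hC : IsAbelianCode C) (f : Idx r → F) {g : Idx r → F} (hg : g ∈ C) :
    conv f g ∈ C := by
  have conv_eq : conv f g = ∑ u, f u • fun i => g (i - u) := by
    ext i
    simp [conv]
  rw [conv_eq]
  exact C.sum_mem fun u _ => C.smul_mem _ (hC g hg u)

/-- At a nonzero `j`, the character `i ↦ ⟨-i, j⟩` is, up to a scalar, the combination with weights
`⟨-u, j⟩` of the translates of a codeword `f` with `φ_f(j) ≠ 0`. -/
lemma comp_smul_pairing_neg_mem (hα : ∀ k, α k ^ r k = 1) (hC : IsAbelianCode C)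
    (ρ : L →ₗ[F] F) (c : L) {j : Idx r} (hj : j ∉ defSet r α C) :
    (fun i => ρ (c * pairing α (-i) j)) ∈ C := by
  obtain ⟨f, hf, hfj⟩ : ∃ f ∈ C, fourier α f j ≠ 0 := by
    simpa [defSet] using hj
  have as_translates : (fun i => ρ (c * pairing α (-i) j)) =
      ∑ u, ρ (c * (fourier α f j)⁻¹ * pairing α (-u) j) • fun i => f (i - u) := by
    ext i
    have : c * pairing α (-i) j = ∑ u, f (i - u) • (c * (fourier α f j)⁻¹ * pairing α (-u) j) := by
      rw [(eq_mul_inv_iff_mul_eq₀ hfj).2 (sum_pairing_neg_mul_translate hα f i j).symm,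
        Finset.sum_mul, Finset.mul_sum]
      refine Finset.sum_congr rfl fun u _ => ?_
      rw [Algebra.smul_def]
      ring
    simp [this, mul_comm]
  rw [as_translates]
  exact C.sum_mem fun u _ => C.smul_mem _ (hC f hf u)

/-- Over `L` the unit of the code is `∑_{j ∉ D} ⟨-·, j⟩ / N`; as `C` is defined over `F`, composing
it with an `F`-linear retraction `L → F` preserves `e * f = f`. -/
lemma exists_mem_conv_eq_self (hα : ∀ k, IsPrimitiveRoot (α k) (r k)) (hC : IsAbelianCode C) :
    ∃ e ∈ C, ∀ f : Idx r → F, (∀ j ∈ defSet r α C, fourier α f j = 0) → conv e f = f := by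
  have hα' k := (hα k).pow_eq_one
  obtain ⟨ρ, hρ⟩ := (Algebra.linearMap F L).exists_leftInverse_of_injective
    (LinearMap.ker_eq_bot.2 (algebraMap F L).injective)
  have hρ (x : F) : ρ (algebraMap F L x) = x := LinearMap.congr_fun hρ x
  let c := (Fintype.card (Idx r) : L)⁻¹
  let S := Finset.univ.filter (· ∉ defSet r α C)
  refine ⟨∑ j ∈ S, fun i => ρ (c * pairing α (-i) j), C.sum_mem fun j hj =>
    comp_smul_pairing_neg_mem hα' hC ρ c (Finset.mem_filter.1 hj).2, fun f hf => ?_⟩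
  ext i
  calc conv (∑ j ∈ S, fun i => ρ (c * pairing α (-i) j)) f i
      = ρ (∑ u, (∑ j ∈ S, c * pairing α (-u) j) * algebraMap F L (f (i - u))) := by
        simp [conv, mul_comm _ (algebraMap F L _), ← Algebra.smul_def, mul_comm _ (f _)]
    _ = ρ (c * ∑ j ∈ S, pairing α (-i) j * fourier α f j) := by
        simp only [← sum_pairing_neg_mul_translate hα', Finset.sum_mul, Finset.mul_sum, mul_assoc]
        rw [Finset.sum_comm]
    _ = ρ (algebraMap F L (f i)) := by
        rw [algebraMap_eq_inv_card_mul_sum_fourier hα, Finset.sum_subset (Finset.subset_univ S)]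
        intro j _ hj
        rw [hf j (by simpa [S] using hj), mul_zero]
    _ = f i := hρ _

lemma mem_iff_forall_mem_defSet (hα : ∀ k, IsPrimitiveRoot (α k) (r k)) (hC : IsAbelianCode C)
    {f : Idx r → F} : f ∈ C ↔ ∀ j ∈ defSet r α C, fourier α f j = 0 := by
  refine ⟨fun hf j hj => hj f hf, fun hf => ?_⟩
  obtain ⟨e, he, hef⟩ := exists_mem_conv_eq_self hα hC
  have conv_comm : conv e f = conv f e := by
    apply fourier_injective hα
    simp only [fourier_conv fun k => (hα k).pow_eq_one, mul_comm]
  rw [← hef f hf, conv_comm]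
  exact conv_mem hC f he

lemma exists_mem_idempotent_fourier_ne_zero_iff (hα : ∀ k, IsPrimitiveRoot (α k) (r k))
    (hC : IsAbelianCode C) :
    ∃ e ∈ C, conv e e = e ∧ ∀ j, fourier α e j ≠ 0 ↔ j ∉ defSet r α C := by
  obtain ⟨e, he, hef⟩ := exists_mem_conv_eq_self hα hC
  refine ⟨e, he, hef e fun j hj => hj e he,
    fun j => ⟨fun hj hjC => hj (hjC e he), fun hj hej => ?_⟩⟩
  refine hj fun f hf => ?_
  rw [← hef f fun i hi => hi f hf, fourier_conv fun k => (hα k).pow_eq_one, Pi.mul_apply, hej,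
    zero_mul]

lemma exists_idempotent_ne_zero (hα : ∀ k, IsPrimitiveRoot (α k) (r k)) (hC : IsAbelianCode C)
    (hC0 : C ≠ ⊥) : ∃ e ∈ C, e ≠ 0 ∧ conv e e = e := by
  obtain ⟨e, he, hee, hej⟩ := exists_mem_idempotent_fourier_ne_zero_iff hα hC
  refine ⟨e, he, ?_, hee⟩
  rintro rfl
  refine hC0 (C.eq_bot_iff.2 fun f hf => (fourier_eq_zero_iff hα).1 (funext fun j => ?_))
  by_contra hfj
  exact (hej j).2 (fun hj => hfj (hj f hf)) (by rw [fourier_zero]; rfl)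

end Idempotent

section ApparentDistance

lemma hsupp_eq_empty {s : ℕ} {r : Fin s → ℕ} {M : Idx r → F} : hsupp M = ∅ ↔ M = 0 := by
  simp [hsupp, Set.eq_empty_iff_forall_notMem, funext_iff]

lemma hsupp_hypercol {s : ℕ} {r : Fin (s + 1) → ℕ} (M : Idx r → F) (k : Fin (s + 1))
    (b : ZMod (r k)) : hsupp (hypercol M k b) = k.insertNth b ⁻¹' hsupp M :=
  rfl

lemma apd_le_iff {s : ℕ} {r : Fin (s + 1) → ℕ} [∀ k, NeZero (r k)] {M : Idx r → F} {d : ℕ} :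
    apd r M ≤ d ↔ ∀ k (b : ZMod (r k)), (runLen M k b + 1) * apd _ (hypercol M k b) ≤ d := by
  simp only [apd, Finset.sup_le_iff, Finset.mem_univ, true_imp_iff]
  refine forall_congr' fun k => ⟨fun h b => ?_, fun h b => h b⟩
  simpa using h ⟨b.val, b.val_lt⟩

lemma runLen_add_one_mul_apd_le {s : ℕ} {r : Fin (s + 1) → ℕ} [∀ k, NeZero (r k)]
    (M : Idx r → F) (k : Fin (s + 1)) (b : ZMod (r k)) :
    (runLen M k b + 1) * apd _ (hypercol M k b) ≤ apd r M :=
  apd_le_iff.1 le_rfl k b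

lemma runLen_congr {s s' : ℕ} {r : Fin (s + 1) → ℕ} {r' : Fin (s' + 1) → ℕ} {M : Idx r → F}
    {N : Idx r' → F} {k : Fin (s + 1)} {k' : Fin (s' + 1)} (hk : r k = r' k')
    (h : ∀ b, hypercol M k b = 0 ↔ hypercol N k' (ZMod.ringEquivCongr hk b) = 0) (b : ZMod (r k)) :
    runLen M k b = runLen N k' (ZMod.ringEquivCongr hk b) := by
  simp only [runLen, h, hk, map_add, map_natCast]
  congr!

lemma runLen_eq_zero {s : ℕ} {r : Fin (s + 1) → ℕ} {M : Idx r → F} {k : Fin (s + 1)}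
    (h : ∀ b, hypercol M k b ≠ 0) (b : ZMod (r k)) : runLen M k b = 0 := by
  simp only [runLen, Finset.card_eq_zero, Finset.filter_eq_empty_iff]
  exact fun j hj hzero => h _ (hzero 1 (Finset.mem_Icc.2 ⟨le_rfl, (Finset.mem_Ico.1 hj).1⟩))

lemma apd_congr {s : ℕ} {r : Fin s → ℕ} {M N : Idx r → F} (h : hsupp M = hsupp N) :
    apd r M = apd r N := by
  induction s with
  | zero =>
    have : M finZeroElim = 0 ↔ N finZeroElim = 0 := not_iff_not.1 (Set.ext_iff.1 h finZeroElim)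
    simp only [apd, this]
  | succ s ih =>
    have hsupp_eq k (b : ZMod (r k)) : hsupp (hypercol M k b) = hsupp (hypercol N k b) := by
      rw [hsupp_hypercol, h, hsupp_hypercol]
    have zero_iff k (b : ZMod (r k)) : hypercol M k b = 0 ↔ hypercol N k b = 0 := by
      rw [← hsupp_eq_empty, hsupp_eq, hsupp_eq_empty]
    have runLen_eq k b : runLen M k b = runLen N k b := by
      simpa [ZMod.ringEquivCongr_refl] using
        runLen_congr rfl (by simpa [ZMod.ringEquivCongr_refl] using zero_iff k) b
    simp only [apd, runLen_eq, fun k b => ih (hsupp_eq k b)]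

lemma apd_zero {s : ℕ} (r : Fin s → ℕ) : apd r (0 : Idx r → F) = 0 := by
  induction s with
  | zero => simp [apd]
  | succ s ih =>
    have hypercol_zero k (b : ZMod (r k)) : hypercol (0 : Idx r → F) k b = 0 := rfl
    simp [apd, hypercol_zero, ih]

lemma apd_pos {s : ℕ} {r : Fin s → ℕ} [∀ k, NeZero (r k)] {M : Idx r → F} (hM : M ≠ 0) :
    0 < apd r M := by
  obtain ⟨i, hi⟩ := Function.ne_iff.1 hM
  induction s with
  | zero => simp_all [apd, Subsingleton.elim finZeroElim i]
  | succ s ih =>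
    have hcol : hypercol M 0 (i 0) (Fin.removeNth 0 i) ≠ 0 := by
      rwa [hypercol, Fin.insertNth_self_removeNth]
    refine lt_of_lt_of_le ?_ (runLen_add_one_mul_apd_le M 0 (i 0))
    exact Nat.mul_pos (Nat.succ_pos _) (ih (Function.ne_iff.2 ⟨_, hcol⟩) _ hcol)

end ApparentDistance

section DropCoord

/-- The projection `Idx r → Idx r'` that deletes the coordinate `ℓ`. The moduli `r'` of the target
are free, since the recursion on hypercolumns identifies them only up to propositional equality. -/
def dropCoord {s : ℕ} {r : Fin (s + 1) → ℕ} {r' : Fin s → ℕ} (ℓ : Fin (s + 1))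
    (hr : ∀ k, r (ℓ.succAbove k) = r' k) (i : Idx r) : Idx r' :=
  fun k => ZMod.ringEquivCongr (hr k) (i (ℓ.succAbove k))

lemma dropCoord_rfl {s : ℕ} {r : Fin (s + 1) → ℕ} (ℓ : Fin (s + 1)) :
    dropCoord (r := r) ℓ (fun _ => rfl) = ℓ.removeNth := by
  ext i k
  simp [dropCoord, ZMod.ringEquivCongr_refl, Fin.removeNth]

lemma dropCoord_surjective {s : ℕ} {r : Fin (s + 1) → ℕ} {r' : Fin s → ℕ} {ℓ : Fin (s + 1)}
    (hr : ∀ k, r (ℓ.succAbove k) = r' k) : Function.Surjective (dropCoord ℓ hr) := by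
  obtain rfl : (fun k => r (ℓ.succAbove k)) = r' := funext hr
  exact fun i => ⟨ℓ.insertNth 0 i, by rw [dropCoord_rfl, Fin.removeNth_insertNth]⟩

lemma ringEquivCongr_apply_congr {s m : ℕ} {r : Fin s → ℕ} (i : Idx r) {k l : Fin s} (hkl : k = l)
    (hk : r k = m) (hl : r l = m) :
    ZMod.ringEquivCongr hk (i k) = ZMod.ringEquivCongr hl (i l) := by
  subst hkl
  rfl

variable {s : ℕ} {r : Fin (s + 2) → ℕ} {r' : Fin (s + 1) → ℕ} {ℓ : Fin (s + 2)}

lemma moduli_predAbove (hr : ∀ k, r (ℓ.succAbove k) = r' k) (k : Fin (s + 1)) (j : Fin s) :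
    r ((ℓ.succAbove k).succAbove ((k.predAbove ℓ).succAbove j)) = r' (k.succAbove j) := by
  rw [← hr, Fin.succAbove_succAbove_succAbove_predAbove]

lemma dropCoord_insertNth (hr : ∀ k, r (ℓ.succAbove k) = r' k) (k : Fin (s + 1))
    (b : ZMod (r (ℓ.succAbove k))) (i : Idx fun j => r ((ℓ.succAbove k).succAbove j)) :
    dropCoord ℓ hr ((ℓ.succAbove k).insertNth b i) =
      k.insertNth (ZMod.ringEquivCongr (hr k) b)
        (dropCoord (k.predAbove ℓ) (moduli_predAbove hr k) i) := by
  refine funext ((Fin.forall_iff_succAbove k).2 ⟨?_, fun j => ?_⟩)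
  · simp [dropCoord]
  · rw [Fin.insertNth_apply_succAbove, dropCoord, dropCoord,
      ← Fin.insertNth_apply_succAbove (α := fun j => ZMod (r j)) (ℓ.succAbove k) b i]
    exact ringEquivCongr_apply_congr _ (Fin.succAbove_succAbove_succAbove_predAbove ..).symm _ _

lemma preimage_insertNth_image_dropCoord (hr : ∀ k, r (ℓ.succAbove k) = r' k) (k : Fin (s + 1))
    (b : ZMod (r (ℓ.succAbove k))) (S : Set (Idx r)) :
    k.insertNth (ZMod.ringEquivCongr (hr k) b) ⁻¹' (dropCoord ℓ hr '' S) =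
      dropCoord (k.predAbove ℓ) (moduli_predAbove hr k) ''
        ((ℓ.succAbove k).insertNth (α := fun j => ZMod (r j)) b ⁻¹' S) := by
  ext i
  constructor
  · rintro ⟨m, hm, hmi⟩
    rw [← (ℓ.succAbove k).insertNth_self_removeNth m, dropCoord_insertNth] at hmi
    obtain ⟨hb, hi⟩ := Fin.insertNth_injective2 hmi
    rw [(ZMod.ringEquivCongr (hr k)).injective.eq_iff] at hb
    refine ⟨(ℓ.succAbove k).removeNth m, ?_, hi⟩
    rwa [Set.mem_preimage, ← hb, Fin.insertNth_self_removeNth]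
  · rintro ⟨i, hi, rfl⟩
    exact ⟨_, hi, dropCoord_insertNth hr k b i⟩

end DropCoord

section ApparentDistanceDrop

variable {s : ℕ} {r : Fin (s + 1) → ℕ} {r' : Fin s → ℕ} {ℓ : Fin (s + 1)}

lemma runLen_add_one_mul_apd_le_of_hsupp_eq_preimage_dropCoord
    (hr : ∀ k, r (ℓ.succAbove k) = r' k) {M : Idx r → F} {N : Idx r' → F}
    (h : hsupp M = dropCoord ℓ hr ⁻¹' hsupp N) (b : ZMod (r ℓ)) :
    (runLen M ℓ b + 1) * apd _ (hypercol M ℓ b) ≤ apd r' N := by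
  obtain rfl : (fun k => r (ℓ.succAbove k)) = r' := funext hr
  have hsupp_eq b : hsupp (hypercol M ℓ b) = hsupp N := by
    ext i
    simp [hsupp_hypercol, h, dropCoord_rfl]
  obtain rfl | hN := eq_or_ne N 0
  · simp [apd_congr (hsupp_eq b), apd_zero]
  · have hcol b : hypercol M ℓ b ≠ 0 := by
      rwa [ne_eq, ← hsupp_eq_empty, hsupp_eq, hsupp_eq_empty]
    rw [runLen_eq_zero hcol, apd_congr (hsupp_eq b), zero_add, one_mul]

variable [∀ k, NeZero (r k)] [∀ k, NeZero (r' k)]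

lemma apd_le_of_hsupp_eq_image_dropCoord (hr : ∀ k, r (ℓ.succAbove k) = r' k) {M : Idx r → F}
    {N : Idx r' → F} (h : hsupp N = dropCoord ℓ hr '' hsupp M) : apd r' N ≤ apd r M := by
  induction s with
  | zero =>
    obtain rfl | hN := eq_or_ne N 0
    · simp [apd_zero]
    have hM : M ≠ 0 := by
      rwa [ne_eq, ← hsupp_eq_empty, h, Set.image_eq_empty, hsupp_eq_empty] at hN
    refine le_trans ?_ (Nat.succ_le_of_lt (apd_pos hM))
    rw [apd]
    split_ifs <;> simp
  | succ s ih =>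
    refine apd_le_iff.2 fun k b' => ?_
    obtain ⟨b, rfl⟩ := (ZMod.ringEquivCongr (hr k)).surjective b'
    have hsupp_eq b : hsupp (hypercol N k (ZMod.ringEquivCongr (hr k) b)) =
        dropCoord (k.predAbove ℓ) (moduli_predAbove hr k) ''
          hsupp (hypercol M (ℓ.succAbove k) b) := by
      rw [hsupp_hypercol, h, preimage_insertNth_image_dropCoord, ← hsupp_hypercol]
    have zero_iff b : hypercol M (ℓ.succAbove k) b = 0 ↔
        hypercol N k (ZMod.ringEquivCongr (hr k) b) = 0 := by
      rw [← hsupp_eq_empty, ← hsupp_eq_empty, hsupp_eq, Set.image_eq_empty]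
    refine le_trans ?_ (runLen_add_one_mul_apd_le M (ℓ.succAbove k) b)
    rw [runLen_congr (hr k) zero_iff]
    exact Nat.mul_le_mul_left _ (ih _ (hsupp_eq b))

lemma apd_le_of_hsupp_eq_preimage_dropCoord (hr : ∀ k, r (ℓ.succAbove k) = r' k) {M : Idx r → F}
    {N : Idx r' → F} (h : hsupp M = dropCoord ℓ hr ⁻¹' hsupp N) : apd r M ≤ apd r' N := by
  induction s with
  | zero =>
    refine apd_le_iff.2 ((Fin.forall_iff_succAbove ℓ).2 ⟨?_, fun k => k.elim0⟩)
    exact runLen_add_one_mul_apd_le_of_hsupp_eq_preimage_dropCoord hr h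
  | succ s ih =>
    refine apd_le_iff.2 ((Fin.forall_iff_succAbove ℓ).2
      ⟨runLen_add_one_mul_apd_le_of_hsupp_eq_preimage_dropCoord hr h, fun k b => ?_⟩)
    have hsupp_eq b : hsupp (hypercol M (ℓ.succAbove k) b) =
        dropCoord (k.predAbove ℓ) (moduli_predAbove hr k) ⁻¹'
          hsupp (hypercol N k (ZMod.ringEquivCongr (hr k) b)) := by
      ext i
      simp only [hsupp_hypercol, h, Set.mem_preimage, dropCoord_insertNth]
    have zero_iff b : hypercol M (ℓ.succAbove k) b = 0 ↔
        hypercol N k (ZMod.ringEquivCongr (hr k) b) = 0 := by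
      rw [← hsupp_eq_empty, ← hsupp_eq_empty, hsupp_eq,
        (dropCoord_surjective _).preimage_injective.eq_iff' Set.preimage_empty]
    refine le_trans ?_ (runLen_add_one_mul_apd_le N k (ZMod.ringEquivCongr (hr k) b))
    rw [runLen_congr (hr k) zero_iff]
    exact Nat.mul_le_mul_left _ (ih _ (hsupp_eq b))

end ApparentDistanceDrop

section Hypercolumn

variable {s : ℕ} {r : Fin (s + 1) → ℕ}

/-- A hypermatrix as the family of its hypercolumns in the direction `ℓ`. -/
def hypercolEquiv (ℓ : Fin (s + 1)) :
    (Idx r → F) ≃ₗ[F] (ZMod (r ℓ) → Idx (fun j => r (ℓ.succAbove j)) → F) :=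
  (LinearEquiv.funCongrLeft F F (Fin.insertNthEquiv (fun k => ZMod (r k)) ℓ)).trans
    (LinearEquiv.curry F F _ _)

lemma hypercolEquiv_apply (ℓ : Fin (s + 1)) (f : Idx r → F) :
    hypercolEquiv ℓ f = hypercol f ℓ :=
  rfl

variable [∀ k, NeZero (r k)]

lemma hypercol_fourier (α : Fin (s + 1) → L) (f : Idx r → F) (ℓ : Fin (s + 1)) (b : ZMod (r ℓ))
    (j : Idx fun j => r (ℓ.succAbove j)) :
    hypercol (fourier α f) ℓ b j =
      ∑ a, α ℓ ^ (a.val * b.val) * fourier (ℓ.removeNth α) (hypercol f ℓ a) j := by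
  rw [hypercol, fourier, ← (Fin.insertNthEquiv (fun k => ZMod (r k)) ℓ).sum_comp,
    Fintype.sum_prod_type]
  refine Finset.sum_congr rfl fun a _ => ?_
  rw [fourier, Finset.mul_sum]
  refine Finset.sum_congr rfl fun i _ => ?_
  simp only [Fin.prod_univ_succAbove _ ℓ, hypercol, Fin.removeNth, Fin.insertNthEquiv_apply,
    Fin.insertNth_apply_same, Fin.insertNth_apply_succAbove]
  exact mul_left_comm ..

lemma eq_zero_of_forall_sum_pow_mul_eq_zero {m : ℕ} [NeZero m] {ζ : L} (hζ : IsPrimitiveRoot ζ m)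
    {c : ZMod m → L} (h : ∀ b : ZMod m, ∑ a, ζ ^ (a.val * b.val) * c a = 0) : c = 0 := by
  obtain ⟨m, rfl⟩ := Nat.exists_eq_succ_of_ne_zero (NeZero.ne m)
  have pow_injective : Function.Injective fun b : Fin (m + 1) => ζ ^ (b : ℕ) :=
    fun a b hab => Fin.ext (hζ.pow_inj a.isLt b.isLt hab)
  refine Matrix.eq_zero_of_forall_index_sum_pow_mul_eq_zero pow_injective fun b => ?_
  simp only [← pow_mul, mul_comm (b : ℕ)]
  exact h b

lemma forall_hypercol_fourier_eq_zero_iff {α : Fin (s + 1) → L} {ℓ : Fin (s + 1)}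
    (hα : IsPrimitiveRoot (α ℓ) (r ℓ)) (f : Idx r → F) (j : Idx fun j => r (ℓ.succAbove j)) :
    (∀ b, hypercol (fourier α f) ℓ b j = 0) ↔
      ∀ a, fourier (ℓ.removeNth α) (hypercol f ℓ a) j = 0 := by
  simp only [hypercol_fourier]
  exact ⟨fun h => congrFun (eq_zero_of_forall_sum_pow_mul_eq_zero hα h), fun h b => by simp [h]⟩

end Hypercolumn

section ExtendCode

variable {s : ℕ} {r : Fin (s + 1) → ℕ} {ℓ : Fin (s + 1)}
  {C : Submodule F (Idx (fun j => r (ℓ.succAbove j)) → F)}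

/-- The code of all hypermatrices whose hypercolumns in the direction `ℓ` lie in `C`, that is, the
tensor product of the full group algebra `F[ZMod (r ℓ)]` with `C`. -/
def extendCode (ℓ : Fin (s + 1)) (C : Submodule F (Idx (fun j => r (ℓ.succAbove j)) → F)) :
    Submodule F (Idx r → F) :=
  (Submodule.pi Set.univ fun _ => C).comap (hypercolEquiv ℓ).toLinearMap

lemma mem_extendCode {f : Idx r → F} : f ∈ extendCode ℓ C ↔ ∀ a, hypercol f ℓ a ∈ C := by
  simp [extendCode, hypercolEquiv_apply, Submodule.mem_pi]

/-- The hypermatrix with hypercolumn `e` at `0` and all other hypercolumns in the direction `ℓ`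
zero; its Fourier transform is that of `e`, repeated in every hypercolumn. -/
def singleCol (ℓ : Fin (s + 1)) (e : Idx (fun j => r (ℓ.succAbove j)) → F) : Idx r → F :=
  (hypercolEquiv ℓ).symm (Pi.single 0 e)

lemma hypercol_singleCol (e : Idx (fun j => r (ℓ.succAbove j)) → F) :
    hypercol (singleCol ℓ e) ℓ = Pi.single 0 e := by
  rw [← hypercolEquiv_apply, singleCol, LinearEquiv.apply_symm_apply]

lemma singleCol_ne_zero {e : Idx (fun j => r (ℓ.succAbove j)) → F} (he : e ≠ 0) :
    singleCol ℓ e ≠ 0 := by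
  simpa [singleCol] using he

lemma singleCol_mem_extendCode {e : Idx (fun j => r (ℓ.succAbove j)) → F} (he : e ∈ C) :
    singleCol ℓ e ∈ extendCode ℓ C := by
  refine mem_extendCode.2 fun a => ?_
  rw [hypercol_singleCol]
  obtain rfl | ha := eq_or_ne a 0
  · rwa [Pi.single_eq_same]
  · rw [Pi.single_eq_of_ne ha]
    exact C.zero_mem

variable [∀ k, NeZero (r k)]

lemma finrank_extendCode :
    Module.finrank F (extendCode ℓ C) = r ℓ * Module.finrank F C := by
  have injective : Function.Injective (C.subtype.compLeft (ZMod (r ℓ))) :=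
    C.injective_subtype.comp_left
  have range_eq := LinearMap.range_compLeft C.subtype (ZMod (r ℓ))
  rw [C.range_subtype] at range_eq
  rw [extendCode, ((hypercolEquiv ℓ).ofSubmodule' _).finrank_eq, ← range_eq,
    LinearMap.finrank_range_of_inj injective, Module.finrank_pi_fintype]
  simp [ZMod.card]

lemma eq_extendCode {α : Fin (s + 1) → L} (hα : ∀ k, IsPrimitiveRoot (α k) (r k))
    (hC : IsAbelianCode C) {D : Submodule F (Idx r → F)} (hD : IsAbelianCode D)
    (hdef : defSet r α D = ℓ.removeNth ⁻¹' defSet _ (ℓ.removeNth α) C) :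
    D = extendCode ℓ C := by
  ext f
  calc f ∈ D
      ↔ ∀ i : Idx r, ℓ.removeNth i ∈ defSet _ (ℓ.removeNth α) C → fourier α f i = 0 := by
        rw [mem_iff_forall_mem_defSet hα hD, hdef]
        rfl
    _ ↔ ∀ j ∈ defSet _ (ℓ.removeNth α) C, ∀ b, hypercol (fourier α f) ℓ b j = 0 := by
        refine ⟨fun h j hj b => h (ℓ.insertNth b j) ?_, fun h i hi => ?_⟩
        · rwa [Fin.removeNth_insertNth]
        · rw [← ℓ.insertNth_self_removeNth i]
          exact h _ hi (i ℓ)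
    _ ↔ ∀ j ∈ defSet _ (ℓ.removeNth α) C,
          ∀ a, fourier (ℓ.removeNth α) (hypercol f ℓ a) j = 0 := by
        simp only [forall_hypercol_fourier_eq_zero_iff (hα ℓ)]
    _ ↔ f ∈ extendCode ℓ C := by
        simp only [mem_extendCode, mem_iff_forall_mem_defSet (fun k => hα (ℓ.succAbove k)) hC]
        exact ⟨fun h a j hj => h j hj a, fun h j hj a => h a j hj⟩

lemma fourier_singleCol (α : Fin (s + 1) → L) (e : Idx (fun j => r (ℓ.succAbove j)) → F)
    (i : Idx r) :
    fourier α (singleCol ℓ e) i = fourier (ℓ.removeNth α) e (ℓ.removeNth i) := by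
  have := hypercol_fourier α (singleCol ℓ e) ℓ (i ℓ) (ℓ.removeNth i)
  rw [hypercol_singleCol, Fintype.sum_eq_single 0] at this
  · simpa [hypercol] using this
  · intro a ha
    simp [Pi.single_eq_of_ne ha, fourier_zero]

lemma conv_singleCol_self {α : Fin (s + 1) → L} (hα : ∀ k, IsPrimitiveRoot (α k) (r k))
    {e : Idx (fun j => r (ℓ.succAbove j)) → F} (he : conv e e = e) :
    conv (singleCol ℓ e) (singleCol ℓ e) = singleCol ℓ e := by
  refine (conv_self_eq_iff hα _).2 fun i => ?_
  rw [fourier_singleCol]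
  exact (conv_self_eq_iff (fun k => hα (ℓ.succAbove k)) e).1 he _

end ExtendCode

section CodeOfZeros

variable {s : ℕ} {r : Fin s → ℕ} [∀ k, NeZero (r k)]

/-- The code of all `f` whose Fourier transform vanishes on `Z`. -/
def codeOfZeros (F : Type*) [Field F] [Algebra F L] (α : Fin s → L) (Z : Set (Idx r)) :
    Submodule F (Idx r → F) where
  carrier := {f | ∀ j ∈ Z, fourier α f j = 0}
  zero_mem' j _ := by simp [fourier_zero]
  add_mem' hf hg j hj := by simp [fourier_add, hf j hj, hg j hj]
  smul_mem' c f hf j hj := by simp [fourier_smul, hf j hj]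

lemma isAbelianCode_codeOfZeros {α : Fin s → L} (hα : ∀ k, α k ^ r k = 1) (Z : Set (Idx r)) :
    IsAbelianCode (codeOfZeros F α Z) := fun f hf a j hj => by
  rw [fourier_translate hα, hf j hj, mul_zero]

end CodeOfZeros

section ApparentDistanceOfCodes

lemma exists_idempotent_apd_eq_dStarAlpha {s : ℕ} {r : Fin s → ℕ} [∀ k, NeZero (r k)]
    {α : Fin s → L} {C : Submodule F (Idx r → F)} {e : Idx r → F} (he : e ∈ C) (he0 : e ≠ 0)
    (hee : conv e e = e) :
    ∃ e' ∈ C, e' ≠ 0 ∧ conv e' e' = e' ∧ apd r (fourier α e') = dStarAlpha r α C := by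
  have nonempty : Set.Nonempty
      {d | ∃ e, e ∈ C ∧ e ≠ 0 ∧ conv e e = e ∧ apd r (fourier α e) = d} :=
    ⟨_, e, he, he0, hee, rfl⟩
  exact Nat.sInf_mem nonempty

lemma dStarAlpha_le {s : ℕ} {r : Fin s → ℕ} [∀ k, NeZero (r k)] {α : Fin s → L}
    {C : Submodule F (Idx r → F)} {e : Idx r → F} (he : e ∈ C) (he0 : e ≠ 0)
    (hee : conv e e = e) : dStarAlpha r α C ≤ apd r (fourier α e) :=
  Nat.sInf_le ⟨e, he, he0, hee, rfl⟩

variable {s : ℕ} {r : Fin (s + 1) → ℕ} [∀ k, NeZero (r k)] {ℓ : Fin (s + 1)} {α : Fin (s + 1) → L}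
  {C : Submodule F (Idx (fun j => r (ℓ.succAbove j)) → F)}

lemma exists_idempotent_hsupp_fourier_eq_image (hα : ∀ k, IsPrimitiveRoot (α k) (r k))
    (hC : IsAbelianCode C) {f : Idx r → F} (hf : f ∈ extendCode ℓ C) :
    ∃ e ∈ C, conv e e = e ∧
      hsupp (fourier (ℓ.removeNth α) e) = ℓ.removeNth '' hsupp (fourier α f) := by
  have hα' k : IsPrimitiveRoot (ℓ.removeNth α k) (r (ℓ.succAbove k)) := hα _
  let D := codeOfZeros F (ℓ.removeNth α)
    {j : Idx fun j => r (ℓ.succAbove j) | ∀ b, hypercol (fourier α f) ℓ b j = 0}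
  have hypercol_mem a : hypercol f ℓ a ∈ D := fun j hj =>
    (forall_hypercol_fourier_eq_zero_iff (hα ℓ) f j).1 hj a
  have D_le : D ≤ C := fun g hg => (mem_iff_forall_mem_defSet hα' hC).2 fun j hj =>
    hg j ((forall_hypercol_fourier_eq_zero_iff (hα ℓ) f j).2 fun a => hj _ (mem_extendCode.1 hf a))
  have mem_defSet_D j : j ∈ defSet _ (ℓ.removeNth α) D ↔
      ∀ b, hypercol (fourier α f) ℓ b j = 0 :=
    ⟨fun hj => (forall_hypercol_fourier_eq_zero_iff (hα ℓ) f j).2 fun a => hj _ (hypercol_mem a),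
      fun hj g hg => hg j hj⟩
  obtain ⟨e, he, hee, hsupp_e⟩ := exists_mem_idempotent_fourier_ne_zero_iff hα'
    (isAbelianCode_codeOfZeros (fun k => (hα' k).pow_eq_one) _ : IsAbelianCode D)
  refine ⟨e, D_le he, hee, ?_⟩
  refine Set.ext fun j => (hsupp_e j).trans ?_
  rw [mem_defSet_D, not_forall]
  constructor
  · rintro ⟨b, hb⟩
    exact ⟨ℓ.insertNth b j, hb, Fin.removeNth_insertNth ..⟩
  · rintro ⟨i, hi, rfl⟩
    refine ⟨i ℓ, ?_⟩
    rwa [hypercol, Fin.insertNth_self_removeNth]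

lemma dStarAlpha_extendCode (hα : ∀ k, IsPrimitiveRoot (α k) (r k)) (hC : IsAbelianCode C)
    (hC0 : C ≠ ⊥) :
    dStarAlpha r α (extendCode ℓ C) =
      dStarAlpha (fun j => r (ℓ.succAbove j)) (ℓ.removeNth α) C := by
  have hα' k : IsPrimitiveRoot (ℓ.removeNth α k) (r (ℓ.succAbove k)) := hα _
  obtain ⟨e₀, he₀, he₀0, he₀e₀⟩ := exists_idempotent_ne_zero hα' hC hC0
  apply le_antisymm
  · obtain ⟨e, he, he0, hee, hde⟩ := exists_idempotent_apd_eq_dStarAlpha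
      (α := ℓ.removeNth α) he₀ he₀0 he₀e₀
    rw [← hde]
    refine (dStarAlpha_le (singleCol_mem_extendCode he) (singleCol_ne_zero he0)
      (conv_singleCol_self hα hee)).trans (apd_le_of_hsupp_eq_preimage_dropCoord (fun _ => rfl) ?_)
    ext i
    simp [hsupp, fourier_singleCol, dropCoord_rfl]
  · obtain ⟨e, he, he0, -, hde⟩ := exists_idempotent_apd_eq_dStarAlpha (α := α)
      (singleCol_mem_extendCode he₀) (singleCol_ne_zero he₀0) (conv_singleCol_self hα he₀e₀)
    obtain ⟨e', he', hee', hsupp_e'⟩ := exists_idempotent_hsupp_fourier_eq_image hα hC he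
    have he'0 : e' ≠ 0 := by
      rintro rfl
      rw [fourier_zero, hsupp_eq_empty.2 rfl, eq_comm, Set.image_eq_empty, hsupp_eq_empty,
        fourier_eq_zero_iff hα] at hsupp_e'
      exact he0 hsupp_e'
    rw [← hde]
    refine (dStarAlpha_le he' he'0 hee').trans
      (apd_le_of_hsupp_eq_image_dropCoord (fun _ => rfl) ?_)
    rw [hsupp_e', dropCoord_rfl]

lemma dStarCode_extendCode (hα : ∃ ζ : L, IsPrimitiveRoot ζ (r ℓ)) (hC : IsAbelianCode C)
    (hC0 : C ≠ ⊥) :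
    dStarCode r L (extendCode ℓ C) = dStarCode (fun j => r (ℓ.succAbove j)) L C := by
  obtain ⟨ζ, hζ⟩ := hα
  refine congrArg sSup (Set.ext fun d => ⟨?_, ?_⟩)
  · rintro ⟨β, hβ, rfl⟩
    refine ⟨ℓ.removeNth β, fun _ => hβ _, ?_⟩
    exact (dStarAlpha_extendCode hβ hC hC0).symm
  · rintro ⟨β, hβ, rfl⟩
    have hζβ : ∀ k, IsPrimitiveRoot (ℓ.insertNth (α := fun _ => L) ζ β k) (r k) :=
      (Fin.forall_iff_succAbove ℓ).2 ⟨by simpa using hζ, fun k => by simpa using hβ k⟩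
    refine ⟨_, hζβ, ?_⟩
    rw [dStarAlpha_extendCode hζβ hC hC0, Fin.removeNth_insertNth]

theorem multiply_dimension_general (hα : ∀ k, IsPrimitiveRoot (α k) (r k)) (hC : IsAbelianCode C)
    (hC0 : C ≠ ⊥) {D : Submodule F (Idx r → F)} (hD : IsAbelianCode D)
    (hdef : defSet r α D =
      ℓ.removeNth ⁻¹' defSet (fun j => r (ℓ.succAbove j)) (ℓ.removeNth α) C) :
    dStarCode r L D = dStarCode (fun j => r (ℓ.succAbove j)) L C ∧
      Module.finrank F D = r ℓ * Module.finrank F C := by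
  obtain rfl := eq_extendCode hα hC hD hdef
  exact ⟨dStarCode_extendCode ⟨α ℓ, hα ℓ⟩ hC hC0, finrank_extendCode⟩

end ApparentDistanceOfCodes

/-- Let `gcd(q, nr) = 1`, let `C` be a nonzero cyclic code in
`A_q(r)` with `d*(C) = δ > 1`, and `α = (α₁,α₂) ∈ U_n × R(C)`.  Then the abelian
code `C_n` in `A_q(n,r)` with defining set `D_α(C_n) = Z_n × D_{α₂}(C)` satisfies
`d*(C_n) = δ` and `dim_{F_q}(C_n) = n · dim_{F_q}(C)`. -/
theorem multiply_dimension
    {F : Type*} [Field F] [Fintype F]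
    (L : Type*) [Field L] [Algebra F L]
    (n r : ℕ) [NeZero n] [NeZero r]
    (hcop : (Fintype.card F).Coprime (n * r))
    (C : Submodule F (Idx (fun _ : Fin 1 => r) → F))
    (hC : IsAbelianCode C) (hC0 : C ≠ ⊥)
    (hd : 1 < dStarCode (fun _ : Fin 1 => r) L C)
    (α₁ : L) (hα₁ : IsPrimitiveRoot α₁ n)
    (α₂ : L) (hα₂ : IsPrimitiveRoot α₂ r)
    (hopt : dStarAlpha (fun _ : Fin 1 => r) (fun _ => α₂) C =
      dStarCode (fun _ : Fin 1 => r) L C)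
    [inst2 : ∀ k, NeZero ((Fin.cons n (fun _ : Fin 1 => r) : Fin 2 → ℕ) k)]
    (Cn : Submodule F (Idx (Fin.cons n (fun _ : Fin 1 => r) : Fin 2 → ℕ) → F))
    (hCn : IsAbelianCode Cn)
    (hCndef : defSet (Fin.cons n (fun _ : Fin 1 => r))
        (Fin.cons α₁ (fun _ : Fin 1 => α₂) : ∀ _ : Fin 2, L) Cn =
      {i | (fun _ : Fin 1 => (i 1 : ZMod r)) ∈
        defSet (fun _ : Fin 1 => r) (fun _ => α₂) C}) :
    dStarCode (Fin.cons n (fun _ : Fin 1 => r)) L Cn =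
      dStarCode (fun _ : Fin 1 => r) L C ∧
    Module.finrank F Cn = n * Module.finrank F C := by
  have removeNth_zero (i : Idx (Fin.cons n fun _ => r : Fin 2 → ℕ)) :
      Fin.removeNth 0 i = fun _ : Fin 1 => (i 1 : ZMod r) :=
    funext (Fin.forall_fin_one.2 rfl)
  refine multiply_dimension_general (ℓ := 0) (Fin.forall_fin_two.2 ⟨hα₁, hα₂⟩) hC hC0 hCn
    (hCndef.trans (Set.ext fun i => ?_))
  rw [Set.mem_preimage, removeNth_zero]
  rfl

end AbelianCodes
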